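/- Let n ≥ 2 and let f : Γ₊ → ℝ be smooth, symmetric, strictly increasing in each argument, positively homogeneous of degree one, and normalized so that f(1, …, 1) = n. Let κ ∈ Γ₊ with κ₁ ≤ κ₂ ≤ … ≤ κₙ and suppose κ₁ = δ' f(κ) for some 0 < δ' ≤ 1/n. Then Σ_{k=1}^n ḟ^k(κ) κ_k (κ_k − κ₁) ≥ ḟ^n(κ) κₙ κ₁ (1/n − δ'). -/

import Mathlib

open Filter Topology Matrix

noncomputable section

/-- The open positive cone Γ₊ ⊂ ℝⁿ. -/
def posCone (n : ℕ) : Set (Fin n → ℝ) := {x | ∀ i, 0 < x i}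

/-- The dual function f_*(x) = f(x₁⁻¹,…,xₙ⁻¹)⁻¹. -/
def dualF (n : ℕ) (f : (Fin n → ℝ) → ℝ) : (Fin n → ℝ) → ℝ :=
  fun x => (f fun i => (x i)⁻¹)⁻¹

/-- First partial derivative ḟ^i(x) = ∂f/∂x_i(x). -/
def D1 (n : ℕ) (f : (Fin n → ℝ) → ℝ) (x : Fin n → ℝ) (i : Fin n) : ℝ :=
  fderiv ℝ f x (Pi.single i 1)

/-- Second partial derivative f̈^{ij}(x) = ∂²f/∂x_i∂x_j(x). -/
def D2 (n : ℕ) (f : (Fin n → ℝ) → ℝ) (x : Fin n → ℝ) (i j : Fin n) : ℝ :=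
  fderiv ℝ (fun y => fderiv ℝ f y (Pi.single i 1)) x (Pi.single j 1)

/-!
Along the diagonal `f (a, …, a) = n a`, so monotonicity of `f` in each variable gives
`n κ₁ ≤ f κ ≤ n κₙ`. Since `κ₁ = δ' f κ` with `δ' ≤ 1`,
`κ₁ (1 / n - δ') = δ' (f κ / n - κ₁) ≤ f κ / n - κ₁ ≤ κₙ - κ₁`.
The sum has nonnegative terms, and this estimates its last one.
-/

theorem linearMap_nonneg_of_single_nonneg {ι : Type*} [Finite ι] [DecidableEq ι]
    {φ : (ι → ℝ) →ₗ[ℝ] ℝ} (hφ : ∀ i, 0 ≤ φ (Pi.single i 1)) {v : ι → ℝ} (hv : 0 ≤ v) : 0 ≤ φ v := by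
  cases nonempty_fintype ι
  rw [← Finset.univ_sum_single v, map_sum]
  refine Finset.sum_nonneg fun i _ => ?_
  have hsingle : (Pi.single i (v i) : ι → ℝ) = v i • Pi.single i 1 := by
    rw [← Pi.single_smul, smul_eq_mul, mul_one]
  rw [hsingle, map_smul]
  exact mul_nonneg (hv i) (hφ i)

theorem monotoneOn_of_hasFDerivWithinAt_nonneg {E : Type*} [NormedAddCommGroup E]
    [NormedSpace ℝ E] [PartialOrder E] [IsOrderedAddMonoid E] {s : Set E} (hs : Convex ℝ s)
    {f : E → ℝ} {f' : E → E →L[ℝ] ℝ} (hf : ∀ x ∈ s, HasFDerivWithinAt f (f' x) s x)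
    (hf' : ∀ x ∈ s, ∀ v, 0 ≤ v → 0 ≤ f' x v) : MonotoneOn f s := by
  intro x hx y hy hxy
  obtain ⟨z, hz, hfz⟩ := domain_mvt hf hs hx hy
  have hzs : z ∈ s := hs.segment_subset hx hy hz
  rw [← sub_nonneg, hfz]
  exact hf' z hzs (y - x) (sub_nonneg.2 hxy)

section PosCone

variable {n : ℕ} {f : (Fin n → ℝ) → ℝ}

theorem posCone_eq_pi_Ioi (n : ℕ) : posCone n = Set.univ.pi fun _ => Set.Ioi 0 := by
  ext x
  simp [posCone]

theorem isOpen_posCone (n : ℕ) : IsOpen (posCone n) := by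
  rw [posCone_eq_pi_Ioi]
  exact isOpen_set_pi Set.finite_univ fun _ _ => isOpen_Ioi

theorem convex_posCone (n : ℕ) : Convex ℝ (posCone n) := by
  rw [posCone_eq_pi_Ioi]
  exact convex_pi fun _ _ => convex_Ioi 0

theorem monotoneOn_posCone_of_D1_nonneg (hf : DifferentiableOn ℝ f (posCone n))
    (hD : ∀ x ∈ posCone n, ∀ i, 0 ≤ D1 n f x i) : MonotoneOn f (posCone n) :=
  monotoneOn_of_hasFDerivWithinAt_nonneg (convex_posCone n)
    (fun _ hx => (hf.hasFDerivAt ((isOpen_posCone n).mem_nhds hx)).hasFDerivWithinAt)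
    fun x hx _ => linearMap_nonneg_of_single_nonneg (φ := (fderiv ℝ f x).toLinearMap) (hD x hx)

theorem apply_const_of_homogeneous
    (hhom : ∀ k : ℝ, 0 < k → ∀ x ∈ posCone n, f (k • x) = k * f x) {a : ℝ} (ha : 0 < a) :
    f (fun _ => a) = a * f fun _ => 1 := by
  simpa [Pi.smul_def] using hhom a ha (fun _ => 1) fun _ => one_pos

end PosCone

theorem mul_one_div_sub_le_sub_of_bounds {c m M F δ : ℝ} (hc : 1 ≤ c) (hm : 0 < m)
    (hmF : m * c ≤ F) (hFM : F ≤ M * c) (hδ : m = δ * F) :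
    m * (1 / c - δ) ≤ M - m := by
  have hc0 : 0 < c := one_pos.trans_le hc
  have hmF' : m ≤ F / c := (le_div_iff₀ hc0).2 hmF
  have hFM' : F / c ≤ M := (div_le_iff₀ hc0).2 hFM
  have hF : 0 < F := (mul_pos hm hc0).trans_le hmF
  have hδ1 : δ ≤ 1 := by
    refine le_of_mul_le_mul_right ?_ hF
    rw [← hδ, one_mul]
    exact hmF'.trans (div_le_self hF.le hc)
  calc m * (1 / c - δ) = δ * (F / c - m) := by rw [hδ]; ring
    _ ≤ F / c - m := mul_le_of_le_one_left (sub_nonneg.2 hmF') hδ1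
    _ ≤ M - m := sub_le_sub_right hFM' m

theorem zero_order_lower_bound_general {n : ℕ} {f : (Fin n → ℝ) → ℝ}
    (hf : DifferentiableOn ℝ f (posCone n)) (hD : ∀ x ∈ posCone n, ∀ i, 0 ≤ D1 n f x i)
    {c : ℝ} (hc : 1 ≤ c) (hdiag : ∀ a : ℝ, 0 < a → f (fun _ => a) = a * c)
    {κ : Fin n → ℝ} (hκ : κ ∈ posCone n) {i j : Fin n} (hi : ∀ k, κ i ≤ κ k)
    (hj : ∀ k, κ k ≤ κ j) {δ : ℝ} (hδ : κ i = δ * f κ) :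
    D1 n f κ j * κ j * κ i * (1 / c - δ) ≤ ∑ k, D1 n f κ k * κ k * (κ k - κ i) := by
  have hmono : MonotoneOn f (posCone n) := monotoneOn_posCone_of_D1_nonneg hf hD
  have hlower : κ i * c ≤ f κ := hdiag (κ i) (hκ i) ▸ hmono (fun _ => hκ i) hκ hi
  have hupper : f κ ≤ κ j * c := hdiag (κ j) (hκ j) ▸ hmono hκ (fun _ => hκ j) hj
  have hgap : κ i * (1 / c - δ) ≤ κ j - κ i :=
    mul_one_div_sub_le_sub_of_bounds hc (hκ i) hlower hupper hδ
  have hweight (k : Fin n) : 0 ≤ D1 n f κ k * κ k := mul_nonneg (hD κ hκ k) (hκ k).le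
  calc D1 n f κ j * κ j * κ i * (1 / c - δ)
      = D1 n f κ j * κ j * (κ i * (1 / c - δ)) := mul_assoc _ _ _
    _ ≤ D1 n f κ j * κ j * (κ j - κ i) := mul_le_mul_of_nonneg_left hgap (hweight j)
    _ ≤ ∑ k, D1 n f κ k * κ k * (κ k - κ i) :=
      Finset.single_le_sum (f := fun k => D1 n f κ k * κ k * (κ k - κ i))
        (fun k _ => mul_nonneg (hweight k) (sub_nonneg.2 (hi k))) (Finset.mem_univ j)

/-- if `κ ∈ Γ₊` is ordered increasingly with `κ₁ = δ' f(κ)`, `0 < δ' ≤ 1/n`,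
then `Σ_k ḟ^k κ_k (κ_k − κ₁) ≥ ḟ^n κ_n κ₁ (1/n − δ')`. -/
theorem zero_order_lower_bound (n : ℕ) [NeZero n] (hn : 2 ≤ n) (f : (Fin n → ℝ) → ℝ)
    (hsmooth : ContDiffOn ℝ (⊤ : ℕ∞) f (posCone n))
    (hsym : ∀ σ : Equiv.Perm (Fin n), ∀ x ∈ posCone n, f (x ∘ σ) = f x)
    (hmono : ∀ x ∈ posCone n, ∀ i, 0 < D1 n f x i)
    (hhom : ∀ k : ℝ, 0 < k → ∀ x ∈ posCone n, f (k • x) = k * f x)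
    (hnorm : f (fun _ => 1) = n)
    (κ : Fin n → ℝ) (hκ : κ ∈ posCone n) (hord : Monotone κ)
    (δ' : ℝ) (hδ'0 : 0 < δ') (hδ'n : δ' ≤ 1 / n)
    (hmin : κ 0 = δ' * f κ) :
    D1 n f κ ⟨n - 1, by omega⟩ * κ ⟨n - 1, by omega⟩ * κ 0 * (1 / n - δ') ≤
      ∑ k, D1 n f κ k * κ k * (κ k - κ 0) := by
  exact zero_order_lower_bound_general (hsmooth.differentiableOn (by simp))
    (fun x hx i => (hmono x hx i).le) (by exact_mod_cast one_le_two.trans hn)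
    (fun a ha => hnorm ▸ apply_const_of_homogeneous hhom ha) hκ
    (fun k => hord (Fin.zero_le k)) (fun k => hord (Fin.le_def.2 (by dsimp only; omega))) hmin
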